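/- Set λ = 2θ/G + 1/2 and a = 1 − 1/λ. Then the directional trader's Nash-equilibrium schedule ξ = (X/2)(v + w) has components ξ_k = (X/2)·(a^{k−1} + a^{N+1−k}) / (λ(1 − a^{N+1})) for every k = 1, 2, …, N+1 (with the convention a⁰ = 1). -/

import Mathlib

open Matrix

/-!
Put `d = G λ`, and let `L` be the matrix with `G` below the diagonal, `d` on it and `0` above it.
Then `Γ_θ + Γ̃ = L + G e eᵀ` and `Γ_θ - Γ̃ = Lᵀ`. Since `λ (1 - a) = 1`, the geometric vector
`u = (1, a, a², …, a^N)` satisfies `L u = d e`. The rank-one term `G e eᵀ` still sends `u` to a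
multiple of `e` and keeps the matrix invertible when `a^(N+1) ≠ 2`, so `v` is `u` normalized to
total weight `1`; and `Lᵀ` is `L` with the order of the indices reversed, so `w` is `v` read
backwards.
-/

section InverseMulVec

variable {n R : Type*} [Fintype n] [DecidableEq n] [CommRing R] {M : Matrix n n R}

theorem det_add_vecMulVec (hM : IsUnit M.det) (u v : n → R) :
    (M + vecMulVec u v).det = M.det * (1 + v ⬝ᵥ (M⁻¹ *ᵥ u)) := by
  rw [vecMulVec_eq Unit, det_add_replicateCol_mul_replicateRow hM, Matrix.mul_assoc,
    ← replicateCol_mulVec, det_unique (n := Unit), Matrix.add_apply, one_apply_eq,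
    replicateRow_mul_replicateCol_apply]

variable {e u : n → R} {t : R}

theorem smul_inv_mulVec_eq (hM : IsUnit M.det) (hMu : M *ᵥ u = t • e) : t • (M⁻¹ *ᵥ e) = u := by
  rw [← mulVec_smul, ← hMu, mulVec_mulVec, nonsing_inv_mul M hM, one_mulVec]

theorem mul_dotProduct_inv_mulVec_eq_one (hM : IsUnit M.det) (hMu : M *ᵥ u = t • e)
    (heu : e ⬝ᵥ u = 1) : t * (e ⬝ᵥ (M⁻¹ *ᵥ e)) = 1 := by
  rw [← smul_eq_mul, ← dotProduct_smul, smul_inv_mulVec_eq hM hMu, heu]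

end InverseMulVec

section FundamentalSolution

variable {m n K : Type*} [Fintype m] [DecidableEq m] [Fintype n] [DecidableEq n] [Field K]

/-- The fundamental solution `M⁻¹ e / (eᵀ M⁻¹ e)`: the multiple of `M⁻¹ e` with `e`-weight `1`.
It is meaningful when `M` is invertible and `eᵀ M⁻¹ e ≠ 0`. -/
noncomputable def fundamentalSolution (M : Matrix n n K) (e : n → K) : n → K :=
  (e ⬝ᵥ (M⁻¹ *ᵥ e))⁻¹ • (M⁻¹ *ᵥ e)

theorem fundamentalSolution_submatrix_equiv (M : Matrix n n K) (e : n → K) (σ : m ≃ n) :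
    fundamentalSolution (M.submatrix σ σ) (e ∘ σ) = fundamentalSolution M e ∘ σ := by
  have hsolve : (M.submatrix σ σ)⁻¹ *ᵥ (e ∘ σ) = (M⁻¹ *ᵥ e) ∘ σ := by
    rw [inv_submatrix_equiv, submatrix_mulVec_equiv, Function.comp_assoc, Equiv.self_comp_symm,
      Function.comp_id]
  rw [fundamentalSolution, hsolve, comp_equiv_dotProduct_comp_equiv]
  rfl

variable {M : Matrix n n K} {e u : n → K} {t : K}

theorem fundamentalSolution_eq_of_mulVec_eq_smul (hM : IsUnit M.det) (hMu : M *ᵥ u = t • e)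
    (heu : e ⬝ᵥ u = 1) : fundamentalSolution M e = u := by
  rw [fundamentalSolution, inv_eq_of_mul_eq_one_left (mul_dotProduct_inv_mulVec_eq_one hM hMu heu),
    smul_inv_mulVec_eq hM hMu]

theorem fundamentalSolution_add_smul_vecMulVec {c : K} (hM : IsUnit M.det)
    (hMu : M *ᵥ u = t • e) (heu : e ⬝ᵥ u = 1) (htc : t + c ≠ 0) :
    fundamentalSolution (M + c • vecMulVec e e) e = u := by
  have hts : t * (e ⬝ᵥ (M⁻¹ *ᵥ e)) = 1 := mul_dotProduct_inv_mulVec_eq_one hM hMu heu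
  have hunit : IsUnit (M + c • vecMulVec e e).det := by
    rw [← smul_vecMulVec, det_add_vecMulVec hM, mulVec_smul, dotProduct_smul, smul_eq_mul, ← hts,
      ← add_mul]
    exact hM.mul (mul_ne_zero htc (right_ne_zero_of_mul_eq_one hts)).isUnit
  refine fundamentalSolution_eq_of_mulVec_eq_smul (t := t + c) hunit ?_ heu
  rw [add_mulVec, hMu, smul_mulVec, vecMulVec_mulVec, heu, MulOpposite.op_one, one_smul, add_smul]

end FundamentalSolution

section LowerStep

/-- The lower triangular `n × n` matrix with `c` below the diagonal and `d` on it. -/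
def lowerStep {R : Type*} [Zero R] (n : ℕ) (c d : R) : Matrix (Fin n) (Fin n) R :=
  of fun i j => if j < i then c else if i = j then d else 0

theorem det_lowerStep {R : Type*} [CommRing R] (n : ℕ) (c d : R) :
    (lowerStep n c d).det = d ^ n := by
  rw [det_of_isLowerTriangular]
  · simp [lowerStep]
  · intro i j hij
    have hlt : i < j := hij
    simp [lowerStep, hlt.ne, hlt.not_gt]

theorem isUnit_det_lowerStep {R : Type*} [CommRing R] (n : ℕ) (c : R) {d : R} (hd : IsUnit d) :
    IsUnit (lowerStep n c d).det := by
  rw [det_lowerStep]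
  exact hd.pow n

theorem lowerStep_add_smul_one {R : Type*} [NonAssocSemiring R] (n : ℕ) (c d s : R) :
    lowerStep n c d + s • 1 = lowerStep n c (d + s) := by
  ext i j
  rcases lt_trichotomy i j with hij | rfl | hij
  · simp [lowerStep, hij.ne, hij.not_gt]
  · simp [lowerStep]
  · simp [lowerStep, hij, hij.ne']

theorem smul_vecMulVec_one_sub_lowerStep {R : Type*} [NonAssocRing R] (n : ℕ) (c d : R) :
    c • vecMulVec 1 1 - lowerStep n c d = (lowerStep n c (c - d))ᵀ := by
  ext i j
  rcases lt_trichotomy i j with hij | rfl | hij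
  · simp [lowerStep, hij, hij.ne, hij.not_gt]
  · simp [lowerStep]
  · simp [lowerStep, hij, hij.ne, hij.not_gt]

theorem transpose_lowerStep {R : Type*} [Zero R] (n : ℕ) (c d : R) :
    (lowerStep n c d)ᵀ = (lowerStep n c d).submatrix Fin.revPerm Fin.revPerm := by
  ext i j
  simp only [lowerStep, transpose_apply, submatrix_apply, of_apply, Fin.revPerm_apply,
    Fin.rev_lt_rev, Fin.rev_inj, eq_comm]

theorem lowerStep_mulVec_pow {R : Type*} [CommRing R] (n : ℕ) {a c d : R} (h : d * (1 - a) = c) :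
    lowerStep n c d *ᵥ (fun j => a ^ (j : ℕ)) = d • 1 := by
  suffices hrow : ∀ i, ∑ j, lowerStep n c d i j * a ^ (j : ℕ) = d by
    ext i
    exact (hrow i).trans (mul_one d).symm
  induction n with
  | zero => exact fun i => i.elim0
  | succ n ih =>
    intro i
    rw [Fin.sum_univ_succ]
    cases i using Fin.cases with
    | zero => simp [lowerStep, (Fin.succ_ne_zero _).symm]
    | succ i =>
      have htail : ∑ j : Fin n, lowerStep (n + 1) c d i.succ j.succ * a ^ (j.succ : ℕ) = d * a := by
        have hshift (j : Fin n) : lowerStep (n + 1) c d i.succ j.succ = lowerStep n c d i j := by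
          simp [lowerStep]
        simp only [hshift, Fin.val_succ, pow_succ, ← mul_assoc]
        rw [← Finset.sum_mul, ih]
      have hhead : lowerStep (n + 1) c d i.succ 0 = c := by simp [lowerStep]
      rw [htail, hhead, Fin.val_zero, pow_zero]
      linear_combination -h

/-- The geometric weights `1, a, …, a ^ (n - 1)` divided by `r (1 - a ^ n)`, which is their sum
when `r (1 - a) = 1`. -/
noncomputable def geometricSchedule {K : Type*} [Field K] (n : ℕ) (r a : K) : Fin n → K :=
  fun k => a ^ (k : ℕ) / (r * (1 - a ^ n))

variable {K : Type*} [Field K] (n : ℕ) {a c r : K}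

theorem one_dotProduct_geometricSchedule (h : r * (1 - a) = 1) (ha : a ^ n ≠ 1) :
    1 ⬝ᵥ geometricSchedule n r a = 1 := by
  have hsum : ∑ k : Fin n, a ^ (k : ℕ) = r * (1 - a ^ n) := by
    rw [Fin.sum_univ_eq_sum_range (a ^ ·), ← mul_neg_geom_sum, ← mul_assoc, h, one_mul]
  have hsum_ne : r * (1 - a ^ n) ≠ 0 :=
    mul_ne_zero (left_ne_zero_of_mul_eq_one h) (sub_ne_zero.mpr ha.symm)
  simp only [one_dotProduct, geometricSchedule]
  rw [← Finset.sum_div, hsum, div_self hsum_ne]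

theorem lowerStep_mulVec_geometricSchedule (h : r * (1 - a) = 1) :
    lowerStep n c (c * r) *ᵥ geometricSchedule n r a = (c / (1 - a ^ n)) • 1 := by
  have hr : r ≠ 0 := left_ne_zero_of_mul_eq_one h
  have hsmul : geometricSchedule n r a = (r * (1 - a ^ n))⁻¹ • fun k : Fin n => a ^ (k : ℕ) := by
    ext k
    exact div_eq_inv_mul _ _
  have hpow := lowerStep_mulVec_pow n (a := a) (c := c) (d := c * r) (by rw [mul_assoc, h, mul_one])
  rw [hsmul, mulVec_smul, hpow, smul_smul]
  congr 1
  rw [inv_mul_eq_div, mul_comm r, mul_div_mul_right _ _ hr]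

theorem fundamentalSolution_lowerStep (hc : c ≠ 0) (h : r * (1 - a) = 1) (ha : a ^ n ≠ 1) :
    fundamentalSolution (lowerStep n c (c * r)) 1 = geometricSchedule n r a :=
  fundamentalSolution_eq_of_mulVec_eq_smul
    (isUnit_det_lowerStep n c (mul_ne_zero hc (left_ne_zero_of_mul_eq_one h)).isUnit)
    (lowerStep_mulVec_geometricSchedule n h) (one_dotProduct_geometricSchedule n h ha)

theorem fundamentalSolution_lowerStep_add_smul_vecMulVec_one (hc : c ≠ 0) (h : r * (1 - a) = 1)
    (ha₁ : a ^ n ≠ 1) (ha₂ : a ^ n ≠ 2) :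
    fundamentalSolution (lowerStep n c (c * r) + c • vecMulVec 1 1) 1 =
      geometricSchedule n r a := by
  have htc : c / (1 - a ^ n) + c ≠ 0 := by
    have h₁ : 1 - a ^ n ≠ 0 := sub_ne_zero.mpr ha₁.symm
    have h₂ : 2 - a ^ n ≠ 0 := sub_ne_zero.mpr ha₂.symm
    have hsum : c / (1 - a ^ n) + c = c * (2 - a ^ n) / (1 - a ^ n) := by
      field_simp
      ring
    rw [hsum]
    exact div_ne_zero (mul_ne_zero hc h₂) h₁
  exact fundamentalSolution_add_smul_vecMulVec
    (isUnit_det_lowerStep n c (mul_ne_zero hc (left_ne_zero_of_mul_eq_one h)).isUnit)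
    (lowerStep_mulVec_geometricSchedule n h) (one_dotProduct_geometricSchedule n h ha₁) htc

theorem fundamentalSolution_transpose_lowerStep (hc : c ≠ 0) (h : r * (1 - a) = 1)
    (ha : a ^ n ≠ 1) :
    fundamentalSolution (lowerStep n c (c * r))ᵀ 1 = geometricSchedule n r a ∘ Fin.rev := by
  rw [transpose_lowerStep, ← fundamentalSolution_lowerStep n hc h ha]
  exact fundamentalSolution_submatrix_equiv (lowerStep n c (c * r)) 1 Fin.revPerm

end LowerStep

theorem one_sub_one_div_pow_lt_one {F : Type*} [Field F] [LinearOrder F] [IsStrictOrderedRing F]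
    {r : F} (hr : 1 / 2 < r) {n : ℕ} (hn : n ≠ 0) : (1 - 1 / r) ^ n < 1 := by
  have hr₀ : 0 < r := lt_trans one_half_pos hr
  have hinv : 1 / r < 2 := by rwa [div_lt_comm₀ hr₀ two_pos]
  have habs : |1 - 1 / r| < 1 :=
    abs_lt.mpr ⟨by linarith, sub_lt_self _ (one_div_pos.mpr hr₀)⟩
  calc (1 - 1 / r) ^ n ≤ |1 - 1 / r| ^ n := (le_abs_self _).trans_eq (abs_pow _ _)
    _ < 1 := pow_lt_one₀ (abs_nonneg _) habs hn

theorem stmt_7_general {K : Type*} [Field K] [NeZero (2 : K)] (N : ℕ) (G θ X : K) (hG : G ≠ 0)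
    (lam a : K) (hlam : lam = 2 * θ / G + 1 / 2) (hlam₀ : lam ≠ 0) (ha : a = 1 - 1 / lam)
    (ha₁ : a ^ (N + 1) ≠ 1) (ha₂ : a ^ (N + 1) ≠ 2)
    (Γ Γθ Γt : Matrix (Fin (N + 1)) (Fin (N + 1)) K)
    (hΓ : ∀ i j, Γ i j = G)
    (hΓθ : Γθ = Γ + (2 * θ) • (1 : Matrix (Fin (N + 1)) (Fin (N + 1)) K))
    (hΓt : ∀ i j, Γt i j = if j < i then G else if i = j then G / 2 else 0)
    (e : Fin (N + 1) → K) (he : e = fun _ => 1)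
    (v w : Fin (N + 1) → K)
    (hv : v = (e ⬝ᵥ ((Γθ + Γt)⁻¹ *ᵥ e))⁻¹ • ((Γθ + Γt)⁻¹ *ᵥ e))
    (hw : w = (e ⬝ᵥ ((Γθ - Γt)⁻¹ *ᵥ e))⁻¹ • ((Γθ - Γt)⁻¹ *ᵥ e))
    (ξ : Fin (N + 1) → K) (hξ : ξ = (X / 2) • (v + w)) (k : Fin (N + 1)) :
    ξ k = (X / 2) * (a ^ k.val + a ^ (N - k.val)) / (lam * (1 - a ^ (N + 1))) := by
  have hdiag : G / 2 + 2 * θ = G * lam := by rw [hlam]; field_simp; ring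
  have hgeom : lam * (1 - a) = 1 := by rw [ha, sub_sub_cancel, mul_one_div_cancel hlam₀]
  have hΓ' : Γ = G • vecMulVec 1 1 := by ext i j; simp [hΓ]
  have hΓt' : Γt = lowerStep (N + 1) G (G / 2) := Matrix.ext hΓt
  have hadd : Γθ + Γt = lowerStep (N + 1) G (G * lam) + G • vecMulVec 1 1 := by
    rw [hΓθ, hΓ', hΓt', ← hdiag, ← lowerStep_add_smul_one]
    abel
  have hsub : Γθ - Γt = (lowerStep (N + 1) G (G * lam))ᵀ := by
    rw [hΓθ, add_sub_right_comm, hΓ', hΓt', smul_vecMulVec_one_sub_lowerStep, sub_half, ← hdiag,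
      ← lowerStep_add_smul_one, transpose_add, transpose_smul, transpose_one]
  have hv' : v = geometricSchedule (N + 1) lam a := by
    rw [hv, he, hadd]
    exact fundamentalSolution_lowerStep_add_smul_vecMulVec_one _ hG hgeom ha₁ ha₂
  have hw' : w = geometricSchedule (N + 1) lam a ∘ Fin.rev := by
    rw [hw, he, hsub]
    exact fundamentalSolution_transpose_lowerStep _ hG hgeom ha₁
  simp only [hξ, hv', hw', geometricSchedule, Pi.smul_apply, Pi.add_apply, Function.comp_apply,
    Fin.val_rev, Nat.add_sub_add_right, smul_eq_mul]
  rw [← add_div, mul_div_assoc]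

/-- With `λ = 2θ/G + 1/2` and `a = 1 − 1/λ`, the directional trader's Nash-equilibrium
schedule `ξ = (X/2)(v + w)` has components
`ξ_k = (X/2)·(a^{k−1} + a^{N+1−k})/(λ(1 − a^{N+1}))` for `k = 1,…,N+1`. -/
theorem stmt_7 (N : ℕ) (hN : 1 ≤ N) (G θ X : ℝ) (hG : 0 < G) (hθ : 0 < θ)
    (lam a : ℝ) (hlam : lam = 2*θ/G + 1/2) (ha : a = 1 - 1/lam)
    (Γ Γθ Γt : Matrix (Fin (N+1)) (Fin (N+1)) ℝ)
    (hΓ : ∀ i j : Fin (N+1), Γ i j = G)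
    (hΓθ : Γθ = Γ + (2*θ) • (1 : Matrix (Fin (N+1)) (Fin (N+1)) ℝ))
    (hΓt : ∀ i j : Fin (N+1), Γt i j = if j < i then G else if i = j then G/2 else 0)
    (e : Fin (N+1) → ℝ) (he : e = fun _ => 1)
    (v w : Fin (N+1) → ℝ)
    (hv : v = (e ⬝ᵥ ((Γθ + Γt)⁻¹ *ᵥ e))⁻¹ • ((Γθ + Γt)⁻¹ *ᵥ e))
    (hw : w = (e ⬝ᵥ ((Γθ - Γt)⁻¹ *ᵥ e))⁻¹ • ((Γθ - Γt)⁻¹ *ᵥ e))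
    (ξ : Fin (N+1) → ℝ) (hξ : ξ = (X/2) • (v + w)) :
    ∀ k : Fin (N+1),
      ξ k = (X/2) * (a^(k.val) + a^(N - k.val)) / (lam * (1 - a^(N+1))) := by
  have hlam' : 1 / 2 < lam := by rw [hlam]; exact lt_add_of_pos_left _ (by positivity)
  have hpow : a ^ (N + 1) < 1 := ha ▸ one_sub_one_div_pow_lt_one hlam' N.succ_ne_zero
  exact stmt_7_general N G θ X hG.ne' lam a hlam (by linarith) ha hpow.ne
    (hpow.trans one_lt_two).ne Γ Γθ Γt hΓ hΓθ hΓt e he v w hv hw ξ hξ
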